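/- arXiv:1401.6727 — 6 statements merged into one kernel-verified Lean document; each statement's English description precedes it below -/
import Mathlib

section
/- Let p be a prime and i ≤ j natural numbers, and let G = ZMod p^i × ZMod p^j (written additively). If g, h ∈ G are such that the additive subgroup generated by {g, h} is all of G and addOrderOf g ≤ addOrderOf h, then addOrderOf h = p^j. -/
/-!
Every element of the group is killed by `p ^ j`, so both orders are powers of `p`, and the smaller
one, `addOrderOf g`, divides `addOrderOf h`. Hence `addOrderOf h` kills both generators, therefore
the whole group, and in particular `(0, 1)`, whose order is `p ^ j`.
-/

theorem stmt_0 (p : ℕ) (hp : p.Prime) (i j : ℕ) (hij : i ≤ j)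
    (g h : ZMod (p ^ i) × ZMod (p ^ j))
    (hgen : AddSubgroup.closure {g, h} = ⊤)
    (hord : addOrderOf g ≤ addOrderOf h) :
    addOrderOf h = p ^ j := by
  have hkill : ∀ x : ZMod (p ^ i) × ZMod (p ^ j), addOrderOf x ∣ p ^ j := by
    intro x
    rw [addOrderOf_dvd_iff_nsmul_eq_zero]
    ext
    · have h0 : ((p ^ j : ℕ) : ZMod (p ^ i)) = 0 :=
        (ZMod.natCast_eq_zero_iff _ _).2 (pow_dvd_pow p hij)
      rw [Prod.smul_fst, nsmul_eq_mul, h0, zero_mul, Prod.fst_zero]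
    · rw [Prod.smul_snd, nsmul_eq_mul, ZMod.natCast_self, zero_mul, Prod.snd_zero]
  obtain ⟨a, -, ha⟩ := (Nat.dvd_prime_pow hp).1 (hkill g)
  obtain ⟨b, -, hb⟩ := (Nat.dvd_prime_pow hp).1 (hkill h)
  have hdvd : addOrderOf g ∣ addOrderOf h := by
    rw [ha, hb] at hord ⊢
    exact pow_dvd_pow p ((Nat.pow_le_pow_iff_right hp.one_lt).1 hord)
  have hle : AddSubgroup.closure {g, h} ≤
      (nsmulAddMonoidHom (α := ZMod (p ^ i) × ZMod (p ^ j)) (addOrderOf h)).ker := by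
    rw [AddSubgroup.closure_le]
    rintro x (rfl | rfl)
    · exact addOrderOf_dvd_iff_nsmul_eq_zero.1 hdvd
    · exact addOrderOf_nsmul_eq_zero x
  have h01 : addOrderOf h • ((0, 1) : ZMod (p ^ i) × ZMod (p ^ j)) = 0 :=
    hle (hgen ▸ AddSubgroup.mem_top _)
  have h1 := congrArg Prod.snd h01
  rw [Prod.smul_snd, nsmul_eq_mul, mul_one, Prod.snd_zero, ZMod.natCast_eq_zero_iff] at h1
  exact Nat.dvd_antisymm (hkill h) h1
end

section
/- Let p be a prime and i ≤ j natural numbers, and let G = ZMod p^i × ZMod p^j. If g, h ∈ G are such that the additive subgroup generated by {g, h} is all of G and addOrderOf g ≤ addOrderOf h, then h is standard: there exists an additive group automorphism σ : G ≃+ G with σ(0,1) = h. -/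
/-!
The exponent of `G = ZMod (p ^ i) × ZMod (p ^ j)` is `p ^ j`. Since `g` and `h` generate `G` and orders
are powers of `p`, the inequality on orders forces `p ^ (j - 1) • h ≠ 0`. A non-unit of
`ZMod (p ^ (n + 1))` is killed by `p ^ n`, so with `h = (a, b)` either `b` is a unit, or `i = j` and `a`
is a unit. In the first case `(x, y) ↦ (x + y • a, y * b)` is an automorphism carrying `(0, 1)` to `h`;
in the second `(x, y) ↦ (y * a, x + y * b)` is.
-/

lemma pow_mul_eq_zero_of_not_isUnit {p : ℕ} (hp : p.Prime) (n : ℕ) (b : ZMod (p ^ (n + 1)))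
    (hb : ¬ IsUnit b) : (p : ZMod (p ^ (n + 1))) ^ n * b = 0 := by
  haveI : NeZero p := ⟨hp.ne_zero⟩
  obtain ⟨m, rfl⟩ := ZMod.natCast_zmod_surjective b
  rw [ZMod.isUnit_iff_coprime, Nat.coprime_pow_right_iff (Nat.succ_pos n), Nat.coprime_comm,
    hp.coprime_iff_not_dvd, not_not] at hb
  rw [← Nat.cast_pow, ← Nat.cast_mul, ZMod.natCast_eq_zero_iff, pow_succ]
  exact Nat.mul_dvd_mul_left _ hb

lemma exists_addEquiv_of_isUnit_snd {m n : ℕ} [NeZero m] [NeZero n] (hmn : m ∣ n)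
    (a : ZMod m) (b : ZMod n) (hb : IsUnit b) :
    ∃ σ : (ZMod m × ZMod n) ≃+ (ZMod m × ZMod n), σ (0, 1) = (a, b) := by
  let f : (ZMod m × ZMod n) →+ (ZMod m × ZMod n) :=
    { toFun := fun z => (z.1 + ZMod.castHom hmn (ZMod m) z.2 * a, z.2 * b)
      map_zero' := by simp
      map_add' := fun z w => by
        ext
        · simp only [Prod.fst_add, Prod.snd_add, map_add]; ring
        · simp only [Prod.snd_add]; ring }
  have hf : Function.Injective f := by
    rw [injective_iff_map_eq_zero]
    rintro ⟨x, y⟩ hz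
    obtain ⟨h1, h2⟩ := Prod.ext_iff.1 hz
    have hy : y = 0 := hb.mul_left_eq_zero.1 h2
    subst hy
    have hx : x = 0 := by simpa [f] using h1
    rw [hx]; rfl
  refine ⟨AddEquiv.ofBijective f (Finite.injective_iff_bijective.1 hf), ?_⟩
  change ((0 : ZMod m) + ZMod.castHom hmn (ZMod m) 1 * a, 1 * b) = (a, b)
  rw [map_one, zero_add, one_mul, one_mul]

theorem stmt_1 (p : ℕ) (hp : p.Prime) (i j : ℕ) (hij : i ≤ j)
    (g h : ZMod (p ^ i) × ZMod (p ^ j))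
    (hgen : AddSubgroup.closure {g, h} = ⊤)
    (hord : addOrderOf g ≤ addOrderOf h) :
    ∃ σ : (ZMod (p ^ i) × ZMod (p ^ j)) ≃+ (ZMod (p ^ i) × ZMod (p ^ j)),
      σ (0, 1) = h := by
  haveI : NeZero p := ⟨hp.ne_zero⟩
  obtain ⟨a, b⟩ := h
  by_cases hb : IsUnit b
  · exact exists_addEquiv_of_isUnit_snd (pow_dvd_pow p hij) a b hb
  obtain _ | n := j
  · exact absurd (isUnit_of_subsingleton (M := ZMod 1) b) hb
  have hpb := pow_mul_eq_zero_of_not_isUnit hp n b hb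
  have hpa : (p : ZMod (p ^ i)) ^ n * a ≠ 0 := by
    intro hpa
    have hh : p ^ n • ((a, b) : ZMod (p ^ i) × ZMod (p ^ (n + 1))) = 0 := by
      ext
      · simpa using hpa
      · simpa using hpb
    have hle : addOrderOf g ≤ p ^ n :=
      hord.trans (Nat.le_of_dvd (pow_pos hp.pos n) (addOrderOf_dvd_of_nsmul_eq_zero hh))
    have hgtop : p ^ (n + 1) • g = 0 := by
      ext
      · have : ((p ^ (n + 1) : ℕ) : ZMod (p ^ i)) = 0 :=
          (ZMod.natCast_eq_zero_iff _ _).2 (pow_dvd_pow p hij)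
        rw [Prod.smul_fst, nsmul_eq_mul, this, zero_mul]; rfl
      · rw [Prod.smul_snd, nsmul_eq_mul, ZMod.natCast_self, zero_mul]; rfl
    obtain ⟨k, -, hk⟩ := (Nat.dvd_prime_pow hp).1 (addOrderOf_dvd_of_nsmul_eq_zero hgtop)
    have hkn : k ≤ n := (Nat.pow_le_pow_iff_right hp.one_lt).1 (hk ▸ hle)
    have hg : p ^ n • g = 0 :=
      addOrderOf_dvd_iff_nsmul_eq_zero.1 (hk ▸ pow_dvd_pow p hkn)
    -- Both generators lie in the kernel of multiplication by `p ^ n`, hence so does `(0, 1)`.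
    have hker : AddSubgroup.closure {g, (a, b)} ≤
        (nsmulAddMonoidHom (α := ZMod (p ^ i) × ZMod (p ^ (n + 1))) (p ^ n)).ker := by
      rw [AddSubgroup.closure_le]
      rintro z (rfl | rfl)
      · exact hg
      · exact hh
    have h01 : p ^ n • ((0, 1) : ZMod (p ^ i) × ZMod (p ^ (n + 1))) = 0 :=
      hker (hgen ▸ AddSubgroup.mem_top _)
    have h1 : ((p ^ n : ℕ) : ZMod (p ^ (n + 1))) = 0 := by
      simpa using congrArg Prod.snd h01
    rw [ZMod.natCast_eq_zero_iff, Nat.pow_dvd_pow_iff_le_right hp.one_lt] at h1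
    omega
  have hi : i = n + 1 := by
    by_contra hne
    apply hpa
    have : ((p ^ n : ℕ) : ZMod (p ^ i)) = 0 :=
      (ZMod.natCast_eq_zero_iff _ _).2 (pow_dvd_pow p (by omega))
    rw [← Nat.cast_pow, this, zero_mul]
  subst hi
  have ha : IsUnit a := by
    by_contra ha
    exact hpa (pow_mul_eq_zero_of_not_isUnit hp n a ha)
  -- The two factors now coincide, so swapping coordinates reduces to a unit second coordinate.
  obtain ⟨σ, hσ⟩ := exists_addEquiv_of_isUnit_snd dvd_rfl b a ha
  exact ⟨σ.trans AddEquiv.prodComm, by simp [hσ]⟩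
end

section
/- Let m, n be positive integers with m ∣ n, and let G = ZMod m × ZMod n. If h ∈ G has addOrderOf h = n, then h is standard: there exists an additive group automorphism σ : G ≃+ G with σ(0,1) = h. -/
/-!
Write `n = m * k` and `h = (A, B)` with integers `A`, `B`. If `g` divides `B`, `A * k` and `n`,
then `(n / g) • h = 0`, because `(n / g) * A = m * (A * k / g)`. As `h` has order `n`, this forces
`gcd (B, A * k, n) = 1`, so there are integers with `P * B + Q * A * k + T * n = 1`. Let
`c : ZMod n → ZMod m` be the reduction and `ψ : ZMod m → ZMod n` be induced by multiplication
by `k`. Then `σ (x, y) = (P x + A c(y), -Q ψ(x) + B y)` has "determinant" `P B + Q A k = 1` modulo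
`n`, its inverse is given by the adjugate matrix, and `σ (0, 1) = (A, B) = h`.
-/

/-- The order condition on `(A, B)` gives `gcd (B, A * k, m * k) = 1`, here as a Bezout relation. -/
lemma exists_bezout (m k : ℕ) (hm : 0 < m) (hk : 0 < k) (A B : ℤ)
    (hord : addOrderOf ((A, B) : ZMod m × ZMod (m * k)) = m * k) :
    ∃ P Q T : ℤ, P * B + Q * (A * k) + T * (m * k : ℕ) = 1 := by
  set d : ℕ := Int.gcd B (A * k) with hd
  set g : ℕ := Int.gcd d (m * k : ℕ) with hg
  have hgn : g ∣ m * k := Int.natCast_dvd_natCast.mp (Int.gcd_dvd_right ..)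
  have hgd : (g : ℤ) ∣ d := Int.gcd_dvd_left ..
  obtain ⟨e, he⟩ := hgn
  obtain ⟨b, hb⟩ : (g : ℤ) ∣ B := hgd.trans (Int.gcd_dvd_left ..)
  obtain ⟨a, ha⟩ : (g : ℤ) ∣ A * k := hgd.trans (Int.gcd_dvd_right ..)
  have hpos : 0 < m * k := Nat.mul_pos hm hk
  have hgpos : 0 < g := Nat.pos_of_ne_zero (by rintro h0; simp [h0] at he; omega)
  have hepos : 0 < e := Nat.pos_of_ne_zero (by rintro rfl; simp at he; omega)
  have heZ : (m : ℤ) * k = g * e := by exact_mod_cast he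
  have hzero : e • ((A, B) : ZMod m × ZMod (m * k)) = 0 := by
    have h1 : (((e * A : ℤ)) : ZMod m) = 0 := by
      rw [ZMod.intCast_zmod_eq_zero_iff_dvd _ _]
      refine ⟨a, ?_⟩
      have hgk : (g : ℤ) * k ≠ 0 := by positivity
      apply mul_left_cancel₀ hgk
      linear_combination (g : ℤ) * e * ha - (g : ℤ) * a * heZ
    have h2 : (((e * B : ℤ)) : ZMod (m * k)) = 0 := by
      rw [ZMod.intCast_zmod_eq_zero_iff_dvd _ _]
      refine ⟨b, ?_⟩
      push_cast
      linear_combination (e : ℤ) * hb - b * heZ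
    push_cast at h1 h2
    ext
    · simpa using h1
    · simpa using h2
  have hle := Nat.le_of_dvd hepos (hord ▸ addOrderOf_dvd_of_nsmul_eq_zero hzero)
  have hg1 : g = 1 := by
    rw [he] at hle
    have := Nat.le_of_mul_le_mul_right (by simpa using hle : g * e ≤ 1 * e) hepos
    omega
  have e1 := Int.gcd_eq_gcd_ab B (A * k)
  have e2 := Int.gcd_eq_gcd_ab d (m * k : ℕ)
  rw [← hd] at e1
  rw [← hg, hg1] at e2
  generalize Int.gcdA (d : ℤ) (m * k : ℕ) = X at e2
  generalize Int.gcdB (d : ℤ) (m * k : ℕ) = Y at e2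
  refine ⟨Int.gcdA B (A * k) * X, Int.gcdB B (A * k) * X, Y, ?_⟩
  push_cast at e2 ⊢
  linear_combination -e2 - X * e1

theorem stmt_3 (m n : ℕ) (hm : 0 < m) (hn : 0 < n) (hmn : m ∣ n)
    (h : ZMod m × ZMod n) (hord : addOrderOf h = n) :
    ∃ σ : (ZMod m × ZMod n) ≃+ (ZMod m × ZMod n), σ (0, 1) = h := by
  obtain ⟨k, rfl⟩ := hmn
  obtain ⟨a, b⟩ := h
  obtain ⟨A, rfl⟩ := ZMod.intCast_surjective a
  obtain ⟨B, rfl⟩ := ZMod.intCast_surjective b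
  obtain ⟨P, Q, T, hPQ⟩ := exists_bezout m k hm (Nat.pos_of_mul_pos_left hn) A B hord
  let c : ZMod (m * k) →+* ZMod m := ZMod.castHom (Dvd.intro k rfl) (ZMod m)
  let ψ : ZMod m →+ ZMod (m * k) := ZMod.lift m
    ⟨(AddMonoidHom.mulLeft (k : ZMod (m * k))).comp (Int.castAddHom _), by
      have : ((m * k : ℕ) : ZMod (m * k)) = 0 := ZMod.natCast_self _
      push_cast at this
      simpa [mul_comm] using this⟩
  have hψ (z : ℤ) : ψ (z : ZMod m) = k * z := by simp [ψ]
  have hcψ (x : ZMod m) : c (ψ x) = k * x := by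
    obtain ⟨z, rfl⟩ := ZMod.intCast_surjective x
    rw [hψ]; simp
  have hψc (y : ZMod (m * k)) : ψ (c y) = k * y := by
    obtain ⟨z, rfl⟩ := ZMod.intCast_surjective y
    rw [map_intCast, hψ]
  have hψm (z : ℤ) (x : ZMod m) : ψ (z * x) = z * ψ x := by
    rw [← zsmul_eq_mul, map_zsmul, zsmul_eq_mul]
  have hdet : (P * B + Q * (A * k) : ZMod (m * k)) = 1 := by
    have := congrArg (Int.cast : ℤ → ZMod (m * k)) hPQ
    rw [Int.cast_add, Int.cast_mul T, Int.cast_natCast, ZMod.natCast_self] at this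
    simpa using this
  have hdet' : (P * B + Q * (A * k) : ZMod m) = 1 := by
    simpa using congrArg c hdet
  refine ⟨{ toFun := fun x => (P * x.1 + A * c x.2, -(Q * ψ x.1) + B * x.2)
            invFun := fun x => (B * x.1 - A * c x.2, Q * ψ x.1 + P * x.2)
            left_inv := ?_
            right_inv := ?_
            map_add' := ?_ }, ?_⟩
  · rintro ⟨x, y⟩
    ext
    · simp only [map_add, map_neg, map_mul, map_intCast, hcψ]
      linear_combination x * hdet'
    · simp only [map_add, hψm, hψc]
      linear_combination y * hdet
  · rintro ⟨x, y⟩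
    ext
    · simp only [map_add, map_mul, map_intCast, hcψ]
      linear_combination x * hdet'
    · simp only [map_sub, hψm, hψc]
      linear_combination y * hdet
  · rintro ⟨x, y⟩ ⟨x', y'⟩
    ext
    · simp only [Prod.mk_add_mk, map_add]; ring
    · simp only [Prod.mk_add_mk, map_add]; ring
  · simp
end

section
/- Let m, n be positive integers with m ∣ n, and let G = ZMod m × ZMod n. Suppose g, h ∈ G generate G (the additive subgroup closure of {g, h} is all of G) and addOrderOf h = n. Then there exist an additive group automorphism σ : G ≃+ G and a natural number a with 0 ≤ a < n such that g = σ(1,0) + a • σ(0,1) and h = σ(0,1). -/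
/-!
The quotient of `ZMod m × ZMod n` by `⟨h⟩` has order `m`, so `m • g = b • h` for some `b`.
Multiplying by `n / m` and using that `n` kills the group gives `n ∣ (n / m) * b`, hence `m ∣ b`.
With `b = m * c`, the element `e = g - c • h` is killed by `m`, so `(1, 0) ↦ e`, `(0, 1) ↦ h`
defines an endomorphism. Its range contains `g` and `h`, so it is surjective, and by finiteness
it is an automorphism.
-/

theorem stmt_4 (m n : ℕ) (hm : 0 < m) (hn : 0 < n) (hmn : m ∣ n)
    (g h : ZMod m × ZMod n)
    (hgen : AddSubgroup.closure {g, h} = ⊤)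
    (hord : addOrderOf h = n) :
    ∃ (σ : (ZMod m × ZMod n) ≃+ (ZMod m × ZMod n)) (a : ℕ),
      a < n ∧ g = σ (1, 0) + a • σ (0, 1) ∧ h = σ (0, 1) := by
  have : NeZero m := ⟨hm.ne'⟩
  have : NeZero n := ⟨hn.ne'⟩
  have hnh : n • h = 0 := addOrderOf_dvd_iff_nsmul_eq_zero.mp hord.dvd
  have hng : n • g = 0 := by
    obtain ⟨k, hk⟩ := hmn
    ext
    · simp [hk]
    · simp
  have hidx : (AddSubgroup.zmultiples h).index = m := by
    have h1 := (AddSubgroup.zmultiples h).index_mul_card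
    rw [Nat.card_zmultiples, hord, Nat.card_prod, Nat.card_zmod, Nat.card_zmod] at h1
    exact Nat.eq_of_mul_eq_mul_right hn h1
  have hmem : m • g ∈ AddSubgroup.zmultiples h := by
    have := AddSubgroup.nsmul_index_mem (AddSubgroup.zmultiples h) g
    rwa [hidx] at this
  rw [← mem_multiples_iff_mem_zmultiples] at hmem
  obtain ⟨b, hb⟩ := hmem
  replace hb : b • h = m • g := hb
  have hmb : m ∣ b := by
    obtain ⟨k, rfl⟩ := hmn
    have hkb : (k * b) • h = 0 := by
      rw [mul_nsmul', hb, ← mul_nsmul', mul_comm k m]; exact hng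
    have hdvd := addOrderOf_dvd_of_nsmul_eq_zero hkb
    rw [hord, mul_comm m k] at hdvd
    exact Nat.dvd_of_mul_dvd_mul_left (Nat.pos_of_mul_pos_left hn) hdvd
  obtain ⟨c, rfl⟩ := hmb
  have hch : (c % n) • h = c • h := by simpa only [hord] using mod_addOrderOf_nsmul h c
  set e := g - c • h with he
  have hme : m • e = 0 := by
    rw [he, nsmul_sub, ← mul_nsmul', hb, sub_self]
  let f₁ : ZMod m →+ ZMod m × ZMod n :=
    ZMod.lift m ⟨(zmultiplesHom _) e, by simpa using hme⟩
  let f₂ : ZMod n →+ ZMod m × ZMod n :=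
    ZMod.lift n ⟨(zmultiplesHom _) h, by simpa using hnh⟩
  have hf₁ : f₁ 1 = e := by
    have := ZMod.lift_coe m ⟨(zmultiplesHom _) e, by simpa using hme⟩ 1
    simpa using this
  have hf₂ : f₂ 1 = h := by
    have := ZMod.lift_coe n ⟨(zmultiplesHom _) h, by simpa using hnh⟩ 1
    simpa using this
  let f := f₁.coprod f₂
  have h10 : f (1, 0) = e := by simp [f, hf₁]
  have h01 : f (0, 1) = h := by simp [f, hf₂]
  have hsurj : Function.Surjective f := by
    rw [← AddMonoidHom.range_eq_top, eq_top_iff, ← hgen, AddSubgroup.closure_le]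
    have hh : h ∈ f.range := ⟨_, h01⟩
    have hE : e ∈ f.range := ⟨_, h10⟩
    rintro x (rfl | rfl)
    · have := add_mem hE (nsmul_mem hh c)
      rwa [he, sub_add_cancel] at this
    · exact hh
  refine ⟨AddEquiv.ofBijective f (Finite.surjective_iff_bijective.mp hsurj), c % n,
    Nat.mod_lt _ hn, ?_, ?_⟩
  · simp only [AddEquiv.ofBijective_apply]
    rw [h10, h01, hch, he, sub_add_cancel]
  · simp only [AddEquiv.ofBijective_apply]
    exact h01.symm
end

section
/- Let m, n be positive integers with m ∣ n, and suppose g, h generate the additive group ZMod m × ZMod n. Then there exist positive integers m₁, m₂, n₁, n₂ and natural numbers a, b such that: (i) m = m₁·n₁, n = m₂·n₂, m₁ ∣ m₂, n₁ ∣ n₂, and gcd(m₂, n₂) = 1; (ii) 0 ≤ a < n₂, 0 ≤ b < m₂, and there is an additive group isomorphism φ : (ZMod m₁ × ZMod m₂) × (ZMod n₁ × ZMod n₂) ≃+ ZMod m × ZMod n such that g = φ(((0,1)), ((1,a))) and h = φ(((1,b)), ((0,1))). (In multiplicative notation: g = g₂h₁h₂^a and h = g₁g₂^bh₂, where (g₁,g₂)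 and (h₁,h₂) are the images under φ of the canonical generators of ZMod m₁ × ZMod m₂ and ZMod n₁ × ZMod n₂ respectively.) -/
/-!
Put `G = ZMod m × ZMod n`. Every element of `G` is killed by the lcm of the orders of `g` and `h`,
and `G` has an element of order `n`, so this lcm is `n`. Hence `n = m₂ * n₂` with `m₂`, `n₂` coprime,
`m₂ ∣ addOrderOf g` and `n₂ ∣ addOrderOf h`. Since
`m ∣ m₂ * n₂`, also `m = m₁ * n₁` with `m₁ ∣ m₂` and `n₁ ∣ n₂`.

Choose an integer `e` with `e ≡ 1 (mod m₂)` and `e ≡ 0 (mod n₂)`, so that multiplication by `e` and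
by `1 - e` are the projections of `G` onto its `m₂`- and `n₂`-parts. In the `m₂`-part, `e • g` has
order `m₂`, and `exists_complement_generator` gives `b` such that `m₁` kills `e • (h - b • g)`.
Symmetrically there is `a` such that `n₁` kills `(1 - e) • (g - a • h)`. The canonical generators are
sent to `e • (h - b • g)`, `e • g`, `(1 - e) • (g - a • h)`, `(1 - e) • h`. The resulting homomorphism
has `g` and `h` in its image, so it is surjective, and it is bijective because both groups have
order `m * n`.
-/

/-- Here `e • G` is the `m₂`-part of `G`, in which `e • g` has order `m₂`. Modulo multiples of `e • g`, the
element `e • h` can be corrected to one killed by `m₁`. The quotient of `e • G` by `e • g` has order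
`m₁`, so `m₁ • e • h` is some `C • e • g`; since `m₂` kills `e • h`, necessarily `m₁ ∣ C`. -/
lemma exists_complement_generator {G : Type*} [AddCommGroup G] [Finite G]
    {m₁ m₂ n₁ n₂ : ℕ} (hm₂ : 0 < m₂)
    (hcard : Nat.card G = (m₁ * n₁) * (m₂ * n₂)) (hexp : ∀ x : G, (m₂ * n₂) • x = 0)
    (h₁ : m₁ ∣ m₂) (h₂ : n₁ ∣ n₂) (hco : Nat.Coprime m₂ n₂)
    (g h : G) (hg : m₂ ∣ addOrderOf g) (e : ℤ) (he₁ : (m₂ : ℤ) ∣ e - 1) (he₂ : (n₂ : ℤ) ∣ e) :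
    ∃ b : ℕ, b < m₂ ∧ m₁ • (e • (h - b • g)) = 0 := by
  obtain ⟨N, hN⟩ := hg
  obtain ⟨d, hd⟩ := h₁
  have hm₁ : 0 < m₁ := Nat.pos_of_ne_zero (by rintro rfl; simp at hd; omega)
  have hd0 : 0 < d := Nat.pos_of_ne_zero (by rintro rfl; simp at hd; omega)
  -- `m₂ * e` is divisible by `m₂ * n₂`.
  have hkill : ∀ x : G, ((m₂ : ℤ) * e) • x = 0 := by
    intro x
    obtain ⟨v, rfl⟩ := he₂
    have := hexp (v • x)
    rw [← natCast_zsmul, ← mul_zsmul] at this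
    rw [← this]; congr 1; push_cast; ring
  have hI := (AddSubgroup.zmultiples g).index_mul_card
  rw [Nat.card_zmultiples, hN, hcard] at hI
  have hI' : (AddSubgroup.zmultiples g).index * N = m₁ * (n₁ * n₂) := by
    apply Nat.eq_of_mul_eq_mul_left hm₂
    linarith
  obtain ⟨c, hc⟩ := AddSubgroup.mem_zmultiples_iff.1
    (AddSubgroup.nsmul_index_mem (AddSubgroup.zmultiples g) h)
  have hcop : Nat.Coprime m₂ (n₁ * n₂) :=
    Nat.Coprime.mul_right (hco.coprime_dvd_right h₂) hco
  obtain ⟨w, u, huw⟩ := Nat.isCoprime_iff_coprime.2 hcop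
  -- The multiplier `u` inverts `n₁ * n₂` modulo `m₂`, turning the index of `⟨g⟩` into `m₁`.
  have hC : ((m₁ : ℤ) * e) • h = (u * N * c * e) • g := by
    have key : (u * e * N) • (c • g) = (u * e * N) • ((AddSubgroup.zmultiples g).index • h) := by
      rw [hc]
    rw [← natCast_zsmul, ← mul_zsmul, ← mul_zsmul] at key
    have e1 : u * N * c * e = u * e * N * c := by ring
    have e2 : u * e * N * ((AddSubgroup.zmultiples g).index : ℤ)
        = m₁ * e - (w * m₁) * (m₂ * e) := by
      have : ((AddSubgroup.zmultiples g).index : ℤ) * N = m₁ * (n₁ * n₂) := by exact_mod_cast hI'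
      push_cast at huw
      linear_combination (u * e) * this + (m₁ * e) * huw
    rw [e1, key, e2, sub_zsmul, mul_zsmul h (w * m₁), hkill, zsmul_zero]
    simp
  have hdiv : (m₁ : ℤ) ∣ u * N * c := by
    have h0 : ((d : ℤ) * (u * N * c * e)) • g = 0 := by
      rw [mul_zsmul, ← hC, ← mul_zsmul, ← hkill h, hd]
      congr 1; push_cast; ring
    have h1 := addOrderOf_dvd_iff_zsmul_eq_zero.2 h0
    have h2 : (m₂ : ℤ) ∣ e * (d * (u * N * c)) := by
      rw [hN] at h1; push_cast at h1
      refine (Dvd.intro _ rfl).trans (h1.trans (dvd_of_eq ?_)); ring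
    have hce : IsCoprime (m₂ : ℤ) e := by
      obtain ⟨q, hq⟩ := he₁
      exact ⟨-q, 1, by linear_combination hq⟩
    have h3 := hce.dvd_of_dvd_mul_left h2
    rw [hd] at h3; push_cast at h3
    rw [mul_comm (m₁ : ℤ)] at h3
    exact Int.dvd_of_mul_dvd_mul_left (by exact_mod_cast hd0.ne') h3
  obtain ⟨t, ht⟩ := hdiv
  have hm₂' : (0 : ℤ) < m₂ := by exact_mod_cast hm₂
  obtain ⟨b, hb⟩ := Int.eq_ofNat_of_zero_le (Int.emod_nonneg t hm₂'.ne')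
  have hlt := Int.emod_lt_of_pos t hm₂'
  refine ⟨b, by omega, ?_⟩
  have hbt : (b : ℤ) = t - m₂ * (t / m₂) := by
    have := Int.emod_add_mul_ediv t m₂
    linarith
  rw [← natCast_zsmul, ← natCast_zsmul, ← mul_zsmul, zsmul_sub, hC, ht, ← mul_zsmul, ← sub_smul]
  have : (m₁ : ℤ) * t * e - m₁ * e * b = (m₁ * (t / m₂)) * (m₂ * e) := by rw [hbt]; ring
  rw [this, mul_zsmul, hkill, zsmul_zero]

lemma exists_zmod_hom {G : Type*} [AddCommGroup G] (k : ℕ) (x : G) (hx : k • x = 0) :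
    ∃ f : ZMod k →+ G, ∀ b : ℕ, f b = b • x := by
  refine ⟨ZMod.lift k ⟨zmultiplesHom G x, by simpa using hx⟩, fun b => ?_⟩
  have := ZMod.lift_coe k ⟨zmultiplesHom G x, by simpa using hx⟩ (b : ℤ)
  simpa using this

theorem stmt_5 (m n : ℕ) (hm : 0 < m) (hn : 0 < n) (hmn : m ∣ n)
    (g h : ZMod m × ZMod n)
    (hgen : AddSubgroup.closure {g, h} = ⊤) :
    ∃ (m₁ m₂ n₁ n₂ : ℕ), 0 < m₁ ∧ 0 < m₂ ∧ 0 < n₁ ∧ 0 < n₂ ∧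
      m = m₁ * n₁ ∧ n = m₂ * n₂ ∧ m₁ ∣ m₂ ∧ n₁ ∣ n₂ ∧ Nat.gcd m₂ n₂ = 1 ∧
      ∃ (a b : ℕ), a < n₂ ∧ b < m₂ ∧
        ∃ φ : ((ZMod m₁ × ZMod m₂) × (ZMod n₁ × ZMod n₂)) ≃+ (ZMod m × ZMod n),
          g = φ ((0, 1), (1, (a : ZMod n₂))) ∧
          h = φ ((1, (b : ZMod m₂)), (0, 1)) := by
  have : NeZero m := ⟨hm.ne'⟩
  have : NeZero n := ⟨hn.ne'⟩
  have hexp : ∀ x : ZMod m × ZMod n, n • x = 0 := by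
    rintro ⟨x, y⟩
    have : (n : ZMod m) = 0 := (ZMod.natCast_eq_zero_iff n m).2 hmn
    ext <;> simp [this]
  have hlcm : Nat.lcm (addOrderOf g) (addOrderOf h) = n := by
    apply Nat.dvd_antisymm
    · exact Nat.lcm_dvd (addOrderOf_dvd_of_nsmul_eq_zero (hexp g))
        (addOrderOf_dvd_of_nsmul_eq_zero (hexp h))
    · set L := Nat.lcm (addOrderOf g) (addOrderOf h)
      have hle : AddSubgroup.closure {g, h} ≤ (nsmulAddMonoidHom (α := ZMod m × ZMod n) L).ker := by
        rw [AddSubgroup.closure_le]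
        rintro x (rfl | rfl)
        · exact addOrderOf_dvd_iff_nsmul_eq_zero.1 (Nat.dvd_lcm_left _ _)
        · exact addOrderOf_dvd_iff_nsmul_eq_zero.1 (Nat.dvd_lcm_right _ _)
      have h1 : ((0, 1) : ZMod m × ZMod n) ∈ (nsmulAddMonoidHom (α := ZMod m × ZMod n) L).ker :=
        hle (hgen ▸ AddSubgroup.mem_top _)
      have h2 : L • ((0, 1) : ZMod m × ZMod n) = 0 := h1
      have h3 := congrArg Prod.snd h2
      exact (ZMod.natCast_eq_zero_iff L n).1 (by simpa using h3)
  have hg0 : addOrderOf g ≠ 0 := (addOrderOf_pos g).ne'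
  have hh0 : addOrderOf h ≠ 0 := (addOrderOf_pos h).ne'
  obtain ⟨m₂, n₂, hn', hco, hm₂g, hn₂h⟩ : ∃ m₂ n₂ : ℕ, n = m₂ * n₂ ∧ Nat.Coprime m₂ n₂ ∧
      m₂ ∣ addOrderOf g ∧ n₂ ∣ addOrderOf h :=
    ⟨_, _, by rw [Nat.factorizationLCMLeft_mul_factorizationLCMRight hg0 hh0, hlcm],
      Nat.coprime_factorizationLCMLeft_factorizationLCMRight _ _,
      Nat.factorizationLCMLeft_dvd_left _ _, Nat.factorizationLCMRight_dvd_right _ _⟩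
  have hm₂ : 0 < m₂ := Nat.pos_of_ne_zero (by rintro rfl; simp at hn'; omega)
  have hn₂ : 0 < n₂ := Nat.pos_of_ne_zero (by rintro rfl; simp at hn'; omega)
  obtain ⟨m₁, n₁, hm', hd₁, hd₂⟩ : ∃ m₁ n₁ : ℕ, m = m₁ * n₁ ∧ m₁ ∣ m₂ ∧ n₁ ∣ n₂ := by
    obtain ⟨x, y, hx, hy, hxy⟩ := exists_dvd_and_dvd_of_dvd_mul (hn' ▸ hmn)
    exact ⟨x, y, hxy, hx, hy⟩
  have hm₁ : 0 < m₁ := Nat.pos_of_dvd_of_pos hd₁ hm₂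
  have hn₁ : 0 < n₁ := Nat.pos_of_dvd_of_pos hd₂ hn₂
  have hcard : Nat.card (ZMod m × ZMod n) = (m₁ * n₁) * (m₂ * n₂) := by
    rw [Nat.card_prod, Nat.card_zmod, Nat.card_zmod, ← hm', ← hn']
  obtain ⟨p, q, hpq⟩ := Nat.isCoprime_iff_coprime.2 hco
  -- `e` is the idempotent of `ℤ / n` cutting out the `m₂`-part.
  obtain ⟨e, he⟩ : ∃ e : ℤ, e = q * n₂ := ⟨_, rfl⟩
  have he₁ : (m₂ : ℤ) ∣ e - 1 := ⟨-p, by rw [he]; linear_combination hpq⟩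
  have he₂ : (n₂ : ℤ) ∣ e := ⟨q, by rw [he]; ring⟩
  have hf₁ : (n₂ : ℤ) ∣ (1 - e) - 1 := ⟨-q, by rw [he]; ring⟩
  have hf₂ : (m₂ : ℤ) ∣ 1 - e := ⟨p, by rw [he]; linear_combination -hpq⟩
  obtain ⟨b, hb, hb'⟩ := exists_complement_generator hm₂ hcard (fun x => hn' ▸ hexp x) hd₁ hd₂ hco
    g h hm₂g e he₁ he₂
  obtain ⟨a, ha, ha'⟩ := exists_complement_generator (m₁ := n₁) (m₂ := n₂) (n₁ := m₁) (n₂ := m₂) hn₂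
    (by rw [hcard]; ring) (fun x => by rw [mul_comm, ← hn']; exact hexp x) hd₂ hd₁ hco.symm
    h g hn₂h (1 - e) hf₁ hf₂
  have hexp' : ∀ (k : ℤ) (x : ZMod m × ZMod n), ((m₂ : ℤ) * n₂ * k) • x = 0 := by
    intro k x
    have := hexp (k • x)
    have hc : (n : ℤ) = m₂ * n₂ := by exact_mod_cast hn'
    rwa [← natCast_zsmul, ← mul_zsmul, hc] at this
  have hk₁ : m₂ • (e • g) = 0 := by
    obtain ⟨v, hv⟩ := he₂
    rw [← natCast_zsmul, ← mul_zsmul, hv, ← mul_assoc]; exact hexp' _ _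
  have hk₂ : n₂ • ((1 - e) • h) = 0 := by
    obtain ⟨v, hv⟩ := hf₂
    rw [← natCast_zsmul, ← mul_zsmul, hv, ← mul_assoc, mul_comm (n₂ : ℤ)]; exact hexp' _ _
  obtain ⟨f₁, hf₁'⟩ := exists_zmod_hom m₁ _ hb'
  obtain ⟨f₂, hf₂'⟩ := exists_zmod_hom m₂ _ hk₁
  obtain ⟨f₃, hf₃'⟩ := exists_zmod_hom n₁ _ ha'
  obtain ⟨f₄, hf₄'⟩ := exists_zmod_hom n₂ _ hk₂
  set Φ := (f₁.coprod f₂).coprod (f₃.coprod f₄) with hΦ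
  have hΦg : g = Φ ((0, 1), (1, (a : ZMod n₂))) := by
    have e2 := hf₂' 1
    have e3 := hf₃' 1
    simp only [Nat.cast_one, one_smul] at e2 e3
    simp only [hΦ, AddMonoidHom.coprod_apply, map_zero, e2, e3, hf₄']
    module
  have hΦh : h = Φ ((1, (b : ZMod m₂)), (0, 1)) := by
    have e1 := hf₁' 1
    have e4 := hf₄' 1
    simp only [Nat.cast_one, one_smul] at e1 e4
    simp only [hΦ, AddMonoidHom.coprod_apply, map_zero, e1, e4, hf₂']
    module
  have hsurj : Function.Surjective Φ := by
    rw [← AddMonoidHom.range_eq_top, eq_top_iff, ← hgen, AddSubgroup.closure_le]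
    rintro x (rfl | rfl)
    · exact ⟨_, hΦg.symm⟩
    · exact ⟨_, hΦh.symm⟩
  have : NeZero m₁ := ⟨hm₁.ne'⟩
  have : NeZero m₂ := ⟨hm₂.ne'⟩
  have : NeZero n₁ := ⟨hn₁.ne'⟩
  have : NeZero n₂ := ⟨hn₂.ne'⟩
  have hbij : Function.Bijective Φ := by
    refine (Nat.bijective_iff_surjective_and_card Φ).2 ⟨hsurj, ?_⟩
    rw [hcard]
    simp only [Nat.card_prod, Nat.card_zmod]
    ring
  exact ⟨m₁, m₂, n₁, n₂, hm₁, hm₂, hn₁, hn₂, hm', hn', hd₁, hd₂, hco, a, b, ha, hb,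
    AddEquiv.ofBijective Φ hbij, hΦg, hΦh⟩
end

section
/- Let N be a positive integer, m : Fin N → ℕ with each m(l) ≥ 1, and G = Π_{l} ZMod (m l). Let a : Fin N → ℕ with a(l) < m(l); for s < t let a₂(s,t) < gcd(m(s), m(t)); for r < s < t let a₃(r,s,t) < gcd(m(r), gcd(m(s), m(t))). Define ω : G³ → ℂ by ω(x, y, z) = Π_{l} ζ_{m(l)}^{a(l)·(x l).val·⌊((y l).val + (z l).val)/m(l)⌋} · Π_{s<t} ζ_{gcd(m(s),m(t))}^{a₂(s,t)·(x t).val·⌊((y s).val + (z s).val)/m(s)⌋} · Π_{r<s<t} ζ_{gcd(m(r),gcd(m(s),m(t)))}^{−a₃(r,s,t)·(z r).val·(y s).val·(x t).val}. Then ω is a normalized 3-cocycle on G with values in ℂˣ: for all x, y, z, w ∈ G, ω(y,z,w)·ω(x, y+z, w)·ω(x,y,z) = ω(x+y, z, w)·ω(x, y, z+w), and ω(x,y,z) = 1 whenever any of x, y, z is 0. -/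
/-! The cocycle condition is checked factor by factor, and in each factor it becomes a congruence
between integer exponents modulo the order `d` of the root of unity (`stdRoot_zpow_congr`).

Write `c(y, z) = ⌊(y.val + z.val)/n⌋` for the carry of an addition in `ZMod n`, so that
`y.val + z.val = (y + z).val + n * c(y, z)`. The first two families of factors have exponent
`α * x.val * c(y, z)`, where `x` and `(y, z)` may live in different cyclic groups. The carry is an
integral 2-cocycle (`carry_cocycle`: both sides count the multiples of `n` removed from
`y.val + z.val + w.val`) and `val` is additive modulo `d`, so their product is a 3-cocycle
(`carry_congr`). The third family has exponent `-α * z.val * y.val * x.val`, and the cocycle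
condition follows from trilinearity modulo `d` (`trilinear_congr`). Each exponent vanishes as soon
as one argument does, since the carry of an addition with `0` is zero. -/

open Finset

/-- `ζ_d = exp(2πi/d)`, the standard primitive `d`-th root of unity in `ℂ`. -/
noncomputable def stdRoot (d : ℕ) : ℂ := Complex.exp (2 * Real.pi * Complex.I / d)

/-- The 3-cochain `ω` associated to the datum `(a, a₂, a₃)` on `Π l, ZMod (m l)`. -/
noncomputable def omegaCocycle (N : ℕ) (m : Fin N → ℕ) (a : Fin N → ℕ)
    (a₂ : Fin N → Fin N → ℕ) (a₃ : Fin N → Fin N → Fin N → ℕ)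
    (x y z : ∀ l, ZMod (m l)) : ℂ :=
  (∏ l, stdRoot (m l) ^ (a l * (x l).val * (((y l).val + (z l).val) / m l))) *
  (∏ s, ∏ t, if s < t then
      stdRoot (Nat.gcd (m s) (m t)) ^
        (a₂ s t * (x t).val * (((y s).val + (z s).val) / m s))
    else 1) *
  (∏ r, ∏ s, ∏ t, if r < s ∧ s < t then
      stdRoot (Nat.gcd (m r) (Nat.gcd (m s) (m t))) ^
        (-(a₃ r s t * (z r).val * (y s).val * (x t).val : ℤ))
    else 1)

lemma stdRoot_ne_zero (d : ℕ) : stdRoot d ≠ 0 := Complex.exp_ne_zero _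

lemma stdRoot_pow_self (d : ℕ) (hd : 0 < d) : stdRoot d ^ d = 1 :=
  (Complex.isPrimitiveRoot_exp d hd.ne').pow_eq_one

lemma stdRoot_zpow_congr {d : ℕ} (hd : 0 < d) {i j : ℤ} (h : i ≡ j [ZMOD d]) :
    stdRoot d ^ i = stdRoot d ^ j := by
  obtain ⟨k, hk⟩ := h.symm.dvd
  rw [show i = j + d * k by linarith, zpow_add₀ (stdRoot_ne_zero d), zpow_mul, zpow_natCast,
    stdRoot_pow_self d hd, one_zpow, mul_one]

lemma val_add_val_eq {n : ℕ} [NeZero n] (x y : ZMod n) :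
    x.val + y.val = (x + y).val + n * ((x.val + y.val) / n) := by
  rw [ZMod.val_add, Nat.mod_add_div]

lemma val_add_congr {n d : ℕ} [NeZero n] (hd : d ∣ n) (x y : ZMod n) :
    ((x + y).val : ℤ) ≡ x.val + y.val [ZMOD d] := by
  have h := Nat.mod_modEq (x.val + y.val) n
  rw [← ZMod.val_add] at h
  exact_mod_cast h.of_dvd hd

/-- The carry is a 2-cocycle with values in `ℕ`. -/
lemma carry_cocycle {n : ℕ} [NeZero n] (y z w : ZMod n) :
    ((y + z).val + w.val) / n + (y.val + z.val) / n =
      (z.val + w.val) / n + (y.val + (z + w).val) / n := by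
  have h1 := val_add_val_eq y z
  have h2 := val_add_val_eq (y + z) w
  have h3 := val_add_val_eq z w
  have h4 := val_add_val_eq y (z + w)
  rw [← add_assoc] at h4
  apply Nat.eq_of_mul_eq_mul_left (Nat.pos_of_neZero n)
  rw [mul_add, mul_add]
  omega

lemma carry_congr {n k d : ℕ} [NeZero n] [NeZero k] (hd : d ∣ k) (α : ℤ)
    (x y : ZMod k) (y' z' w' : ZMod n) :
    α * y.val * ((z'.val + w'.val) / n : ℕ) + α * x.val * (((y' + z').val + w'.val) / n : ℕ) +
        α * x.val * ((y'.val + z'.val) / n : ℕ) ≡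
      α * (x + y).val * ((z'.val + w'.val) / n : ℕ) +
        α * x.val * ((y'.val + (z' + w').val) / n : ℕ) [ZMOD d] := by
  have hc : ((((y' + z').val + w'.val) / n : ℕ) : ℤ) + ((y'.val + z'.val) / n : ℕ) =
      ((z'.val + w'.val) / n : ℕ) + ((y'.val + (z' + w').val) / n : ℕ) := by
    exact_mod_cast carry_cocycle y' z' w'
  have h := (((val_add_congr hd x y).symm.mul_left α).mul_right
    (((z'.val + w'.val) / n : ℕ) : ℤ)).add_right
      (α * x.val * ((y'.val + (z' + w').val) / n : ℕ))
  convert h using 1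
  linear_combination α * x.val * hc

lemma trilinear_congr {p q k d : ℕ} [NeZero p] [NeZero q] [NeZero k] (hp : d ∣ p) (hq : d ∣ q)
    (hk : d ∣ k) (α : ℤ) (z w : ZMod p) (y' z' : ZMod q) (x'' y'' : ZMod k) :
    -(α * w.val * z'.val * y''.val) + -(α * w.val * (y' + z').val * x''.val) +
        -(α * z.val * y'.val * x''.val) ≡
      -(α * w.val * z'.val * (x'' + y'').val) +
        -(α * (z + w).val * y'.val * x''.val) [ZMOD d] := by
  have h1 := val_add_congr hp z w
  have h2 := val_add_congr hq y' z'
  have h3 := val_add_congr hk x'' y''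
  rw [← ZMod.intCast_eq_intCast_iff] at *
  push_cast at *
  rw [h1, h2, h3]
  ring

lemma carry_factor_cocycle {n k d : ℕ} [NeZero n] [NeZero k] (h0 : 0 < d) (hd : d ∣ k) (α : ℕ)
    (x y : ZMod k) (y' z' w' : ZMod n) :
    stdRoot d ^ (α * y.val * ((z'.val + w'.val) / n)) *
        stdRoot d ^ (α * x.val * (((y' + z').val + w'.val) / n)) *
        stdRoot d ^ (α * x.val * ((y'.val + z'.val) / n)) =
      stdRoot d ^ (α * (x + y).val * ((z'.val + w'.val) / n)) *
        stdRoot d ^ (α * x.val * ((y'.val + (z' + w').val) / n)) := by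
  simp only [← pow_add]
  rw [← zpow_natCast, ← zpow_natCast]
  apply stdRoot_zpow_congr h0
  have h := carry_congr hd (α : ℤ) x y y' z' w'
  exact_mod_cast h

lemma trilinear_factor_cocycle {p q k d : ℕ} [NeZero p] [NeZero q] [NeZero k] (h0 : 0 < d)
    (hp : d ∣ p) (hq : d ∣ q) (hk : d ∣ k) (α : ℤ)
    (z w : ZMod p) (y' z' : ZMod q) (x'' y'' : ZMod k) :
    stdRoot d ^ (-(α * w.val * z'.val * y''.val)) *
        stdRoot d ^ (-(α * w.val * (y' + z').val * x''.val)) *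
        stdRoot d ^ (-(α * z.val * y'.val * x''.val)) =
      stdRoot d ^ (-(α * w.val * z'.val * (x'' + y'').val)) *
        stdRoot d ^ (-(α * (z + w).val * y'.val * x''.val)) := by
  simp only [← zpow_add₀ (stdRoot_ne_zero d)]
  exact stdRoot_zpow_congr h0 (trilinear_congr hp hq hk α z w y' z' x'' y'')

theorem stmt_8 (N : ℕ) (hN : 0 < N) (m : Fin N → ℕ) (hm : ∀ l, 1 ≤ m l)
    (a : Fin N → ℕ) (ha : ∀ l, a l < m l)
    (a₂ : Fin N → Fin N → ℕ) (ha₂ : ∀ s t, s < t → a₂ s t < Nat.gcd (m s) (m t))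
    (a₃ : Fin N → Fin N → Fin N → ℕ)
    (ha₃ : ∀ r s t, r < s → s < t → a₃ r s t < Nat.gcd (m r) (Nat.gcd (m s) (m t))) :
    (∀ x y z w : ∀ l, ZMod (m l),
        omegaCocycle N m a a₂ a₃ y z w *
          omegaCocycle N m a a₂ a₃ x (y + z) w *
          omegaCocycle N m a a₂ a₃ x y z =
        omegaCocycle N m a a₂ a₃ (x + y) z w *
          omegaCocycle N m a a₂ a₃ x y (z + w)) ∧
    (∀ x y z : ∀ l, ZMod (m l),
        x = 0 ∨ y = 0 ∨ z = 0 → omegaCocycle N m a a₂ a₃ x y z = 1) := by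
  have hne : ∀ l, NeZero (m l) := fun l => ⟨Nat.one_le_iff_ne_zero.mp (hm l)⟩
  constructor
  · intro x y z w
    -- Both sides are regrouped so that each of the three families is compared separately.
    have regroup : ∀ {p₁ p₂ p₃ q₁ q₂ q₃ r₁ r₂ r₃ s₁ s₂ s₃ t₁ t₂ t₃ : ℂ},
        p₁ * q₁ * r₁ = s₁ * t₁ → p₂ * q₂ * r₂ = s₂ * t₂ → p₃ * q₃ * r₃ = s₃ * t₃ →
        (p₁ * p₂ * p₃) * (q₁ * q₂ * q₃) * (r₁ * r₂ * r₃) =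
          (s₁ * s₂ * s₃) * (t₁ * t₂ * t₃) := by
      intro p₁ p₂ p₃ q₁ q₂ q₃ r₁ r₂ r₃ s₁ s₂ s₃ t₁ t₂ t₃ h₁ h₂ h₃
      calc _ = (p₁ * q₁ * r₁) * (p₂ * q₂ * r₂) * (p₃ * q₃ * r₃) := by ring
        _ = _ := by rw [h₁, h₂, h₃]; ring
    unfold omegaCocycle
    apply regroup
    · simp only [← Finset.prod_mul_distrib]
      refine Finset.prod_congr rfl fun l _ => ?_
      exact carry_factor_cocycle (hm l) dvd_rfl (a l) (x l) (y l) (y l) (z l) (w l)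
    · simp only [← Finset.prod_mul_distrib]
      refine Finset.prod_congr rfl fun s _ => Finset.prod_congr rfl fun t _ => ?_
      split_ifs
      · exact carry_factor_cocycle (Nat.gcd_pos_of_pos_left _ (hm s)) (Nat.gcd_dvd_right _ _)
          (a₂ s t) (x t) (y t) (y s) (z s) (w s)
      · simp
    · simp only [← Finset.prod_mul_distrib]
      refine Finset.prod_congr rfl fun r _ => Finset.prod_congr rfl fun s _ =>
        Finset.prod_congr rfl fun t _ => ?_
      split_ifs
      · exact trilinear_factor_cocycle (Nat.gcd_pos_of_pos_left _ (hm r)) (Nat.gcd_dvd_left _ _)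
          ((Nat.gcd_dvd_right _ _).trans (Nat.gcd_dvd_left _ _))
          ((Nat.gcd_dvd_right _ _).trans (Nat.gcd_dvd_right _ _))
          (a₃ r s t) (z r) (w r) (y s) (z s) (x t) (y t)
      · simp
  · intro x y z h
    have hdiv : ∀ l (u : ZMod (m l)), u.val / m l = 0 := fun l u =>
      Nat.div_eq_of_lt (ZMod.val_lt u)
    unfold omegaCocycle
    rcases h with rfl | rfl | rfl <;> simp [hdiv]
end
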